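/- arXiv:2108.07751 — 2 statements merged into one kernel-verified Lean document; each statement's English description precedes it below -/
import Mathlib

section
/- Let δ > 0 and let U be the union of the L-shapes L_δ(i,j) over all L-anchors (i,j). Let r and r' be nonempty axis-aligned rectangles in ℝ² each disjoint from U, with centres c and c' (the centre of [a,b] × [c,d] is ((a+b)/2, (c+d)/2)). If the centres satisfy d_∞(c, c') < δ, then for every q ∈ r and q' ∈ r' we have d_∞(q, q') < 6·δ. -/
open Set

/-- The `L∞` distance on `ℝ²`. -/
noncomputable def dinf (p q : ℝ × ℝ) : ℝ := max |p.1 - q.1| |p.2 - q.2|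

/-- The axis-aligned rectangle `[a,b] × [c,d]`. -/
def rect (a b c d : ℝ) : Set (ℝ × ℝ) := Set.Icc a b ×ˢ Set.Icc c d

/-- The L-shape with anchor grid point `(i,j)` in the grid with spacing `γ`. -/
def lShape (γ : ℝ) (i j : ℤ) : Set (ℝ × ℝ) :=
  ({(i : ℝ) * γ} ×ˢ Set.Icc ((j : ℝ) * γ) (((j : ℝ) + 1) * γ)) ∪
  (Set.Icc ((i : ℝ) * γ) (((i : ℝ) + 1) * γ) ×ˢ {(j : ℝ) * γ})

/-- `(i,j)` is an L-anchor if `i ≡ j (mod 3)`. -/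
def lAnchor (i j : ℤ) : Prop := i ≡ j [ZMOD 3]

/-!
Every horizontal or vertical line carries a point of the union of the L-shapes within each
half-open segment of length `3δ`: a horizontal line at height `y` with `jδ ≤ y < (j + 1)δ` crosses
the vertical arm of every L-shape anchored at `(i, j)` with `i ≡ j (mod 3)`, and vertical lines
follow by reflection in the diagonal. A rectangle avoiding the union therefore has both sides
shorter than `3δ`, so its points are within `3δ/2` of its centre, and the triangle inequality
through the centres gives even the bound `3δ/2 + δ + 3δ/2 = 4δ`.
-/

/-- The union of all L-shapes with L-anchors in the grid with spacing `γ`. -/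
def lUnion (γ : ℝ) : Set (ℝ × ℝ) :=
  ⋃ (ij : ℤ × ℤ) (_ : lAnchor ij.1 ij.2), lShape γ ij.1 ij.2

theorem mem_lUnion {γ : ℝ} {p : ℝ × ℝ} :
    p ∈ lUnion γ ↔ ∃ i j : ℤ, lAnchor i j ∧ p ∈ lShape γ i j := by
  simp only [lUnion, mem_iUnion, Prod.exists, exists_prop]

theorem swap_mem_lShape {γ : ℝ} {i j : ℤ} {p : ℝ × ℝ} (hp : p ∈ lShape γ i j) :
    p.swap ∈ lShape γ j i :=
  hp.symm.imp And.symm And.symm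

theorem swap_mem_lUnion {γ : ℝ} {p : ℝ × ℝ} (hp : p ∈ lUnion γ) : p.swap ∈ lUnion γ := by
  obtain ⟨i, j, hij, hp⟩ := mem_lUnion.mp hp
  exact mem_lUnion.mpr ⟨j, i, hij.symm, swap_mem_lShape hp⟩

theorem exists_modEq_mul_mem_Ico {γ : ℝ} (hγ : 0 < γ) {n : ℤ} (hn : 0 < n) (j : ℤ) (u : ℝ) :
    ∃ i : ℤ, i ≡ j [ZMOD n] ∧ i * γ ∈ Ico u (u + n * γ) := by
  have period_pos : 0 < n * γ := mul_pos (Int.cast_pos.mpr hn) hγ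
  obtain ⟨k, hk, -⟩ := existsUnique_add_zsmul_mem_Ico period_pos (j * γ) u
  refine ⟨j + n * k, by simp [Int.ModEq], ?_⟩
  convert hk using 1
  push_cast [zsmul_eq_mul]
  ring

theorem exists_mem_Ico_mk_mem_lUnion {γ : ℝ} (hγ : 0 < γ) (u y : ℝ) :
    ∃ x ∈ Ico u (u + 3 * γ), (x, y) ∈ lUnion γ := by
  obtain ⟨j, ⟨hjy, hyj⟩, -⟩ := existsUnique_zsmul_near_of_pos hγ y
  obtain ⟨i, hij, hi⟩ := exists_modEq_mul_mem_Ico hγ three_pos j u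
  refine ⟨i * γ, mod_cast hi, mem_lUnion.mpr ⟨i, j, hij, Or.inl ⟨rfl, ?_, ?_⟩⟩⟩
  · simpa using hjy
  · simpa using hyj.le

theorem sides_lt_of_disjoint_lUnion {γ a b c d : ℝ} (hγ : 0 < γ)
    (hne : (rect a b c d).Nonempty) (hdisj : Disjoint (rect a b c d) (lUnion γ)) :
    b - a < 3 * γ ∧ d - c < 3 * γ := by
  obtain ⟨⟨x, y⟩, hx, hy⟩ := hne
  rw [disjoint_right] at hdisj
  constructor <;> by_contra! h
  · obtain ⟨x', ⟨hax', hx'⟩, hmem⟩ := exists_mem_Ico_mk_mem_lUnion hγ a y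
    exact hdisj hmem ⟨⟨hax', hx'.le.trans (le_sub_iff_add_le'.mp h)⟩, hy⟩
  · obtain ⟨y', ⟨hcy', hy'⟩, hmem⟩ := exists_mem_Ico_mk_mem_lUnion hγ c x
    exact hdisj (swap_mem_lUnion hmem) ⟨hx, hcy', hy'.le.trans (le_sub_iff_add_le'.mp h)⟩

theorem abs_sub_lt_of_mem_Icc_of_abs_midpoint_sub_lt {a b a' b' ℓ ℓ' r t t' : ℝ}
    (hℓ : b - a < ℓ) (hℓ' : b' - a' < ℓ') (hr : |(a + b) / 2 - (a' + b') / 2| < r)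
    (ht : t ∈ Icc a b) (ht' : t' ∈ Icc a' b') :
    |t - t'| < ℓ / 2 + r + ℓ' / 2 := by
  have dist_center : |t - (a + b) / 2| < ℓ / 2 := by
    rw [abs_lt]; constructor <;> linarith [ht.1, ht.2]
  have dist_center' : |(a' + b') / 2 - t'| < ℓ' / 2 := by
    rw [abs_lt]; constructor <;> linarith [ht'.1, ht'.2]
  linarith [abs_sub_le t ((a + b) / 2) t', abs_sub_le ((a + b) / 2) ((a' + b') / 2) t']

theorem stmt10_general {δ x1 x2 y1 y2 x1' x2' y1' y2' : ℝ}
    (hdisj : Disjoint (rect x1 x2 y1 y2) (lUnion δ))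
    (hdisj' : Disjoint (rect x1' x2' y1' y2') (lUnion δ))
    (hcent : dinf ((x1 + x2) / 2, (y1 + y2) / 2) ((x1' + x2') / 2, (y1' + y2') / 2) < δ)
    {q q' : ℝ × ℝ} (hq : q ∈ rect x1 x2 y1 y2) (hq' : q' ∈ rect x1' x2' y1' y2') :
    dinf q q' < 4 * δ := by
  obtain ⟨hcent_fst, hcent_snd⟩ := max_lt_iff.mp hcent
  have hδ : 0 < δ := (abs_nonneg _).trans_lt hcent_fst
  obtain ⟨width, height⟩ := sides_lt_of_disjoint_lUnion hδ ⟨q, hq⟩ hdisj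
  obtain ⟨width', height'⟩ := sides_lt_of_disjoint_lUnion hδ ⟨q', hq'⟩ hdisj'
  have sum_eq : 3 * δ / 2 + δ + 3 * δ / 2 = 4 * δ := by ring
  rw [← sum_eq]
  exact max_lt
    (abs_sub_lt_of_mem_Icc_of_abs_midpoint_sub_lt width width' hcent_fst hq.1 hq'.1)
    (abs_sub_lt_of_mem_Icc_of_abs_midpoint_sub_lt height height' hcent_snd hq.2 hq'.2)

theorem stmt10 (δ : ℝ) (hδ : 0 < δ)
    (x1 x2 y1 y2 x1' x2' y1' y2' : ℝ)
    (hx : x1 ≤ x2) (hy : y1 ≤ y2) (hx' : x1' ≤ x2') (hy' : y1' ≤ y2')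
    (hdisj : Disjoint (rect x1 x2 y1 y2)
      (⋃ (ij : ℤ × ℤ) (_ : lAnchor ij.1 ij.2), lShape δ ij.1 ij.2))
    (hdisj' : Disjoint (rect x1' x2' y1' y2')
      (⋃ (ij : ℤ × ℤ) (_ : lAnchor ij.1 ij.2), lShape δ ij.1 ij.2))
    (hcent : dinf ((x1 + x2) / 2, (y1 + y2) / 2) ((x1' + x2') / 2, (y1' + y2') / 2) < δ) :
    ∀ q ∈ rect x1 x2 y1 y2, ∀ q' ∈ rect x1' x2' y1' y2',
      dinf q q' < 6 * δ := by
  intro q hq q' hq'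
  linarith [stmt10_general hdisj hdisj' hcent hq hq']
end

section
/- Let R₁, …, Rₙ (n ≥ 2) be axis-aligned rectangles in ℝ² all of whose corner coordinates are rational numbers. Then the optimal value δ*_∞ for the L_∞ distance is a rational number. -/
open Set

/-- The minimum pairwise distance of the points `p 0, …, p (n-1)` with respect to
the distance function `d`. -/
noncomputable def minPairDist {n : ℕ} (d : (ℝ × ℝ) → (ℝ × ℝ) → ℝ)
    (p : Fin n → ℝ × ℝ) : ℝ :=
  sInf {x : ℝ | ∃ i j : Fin n, i ≠ j ∧ x = d (p i) (p j)}

/-- The set of values of selections from the rectangles `R i`: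
the minimum pairwise distance over selections, with respect to `d`. -/
noncomputable def selVals {n : ℕ} (d : (ℝ × ℝ) → (ℝ × ℝ) → ℝ)
    (R : Fin n → Set (ℝ × ℝ)) : Set ℝ :=
  {v : ℝ | ∃ p : Fin n → ℝ × ℝ, (∀ i, p i ∈ R i) ∧ v = minPairDist d p}

/-!
The supremum is attained by compactness, say by a selection `p` of value `δ`. If `δ` were
irrational, some `ℚ`-linear functional `f` on `ℝ` would satisfy `f 1 = 0` and `f δ = 1`. The
transvection `x ↦ x + f x • e` is `ℚ`-linear, fixes `ℚ`, and preserves any given inequality once `e`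
is small: an equality because it is a function, a strict inequality by continuity in `e`.
Applied to every coordinate of `p`, it therefore yields a selection whose pairwise distances are
at least the image `δ + e` of `δ`, which for `e > 0` contradicts optimality.
-/

open Filter Topology LinearMap

section Transvection

variable {f : Module.Dual ℚ ℝ}

lemma exists_dual_one_eq_zero_of_irrational {x : ℝ} (hx : Irrational x) :
    ∃ f : Module.Dual ℚ ℝ, f 1 = 0 ∧ f x = 1 := by
  have hx_span : x ∉ Submodule.span ℚ {(1 : ℝ)} := fun h ↦ by
    obtain ⟨q, hq⟩ := Submodule.mem_span_singleton.1 h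
    exact hx ⟨q, by rw [← hq, Rat.smul_one_eq_cast]⟩
  obtain ⟨g, hgx, hg⟩ := Submodule.exists_le_ker_of_notMem hx_span
  have hg_one : g 1 = 0 := hg (Submodule.mem_span_singleton_self 1)
  exact ⟨(g x)⁻¹ • g, by simp [hg_one], by simp [hgx]⟩

lemma transvection_ratCast (hf : f 1 = 0) (e : ℝ) (q : ℚ) : transvection f e (q : ℝ) = q := by
  rw [← Rat.smul_one_eq_cast, map_smul, transvection.apply, hf, zero_smul, add_zero]

lemma eventually_transvection_le_transvection (f : Module.Dual ℚ ℝ) {a b : ℝ} (hab : a ≤ b) :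
    ∀ᶠ e in 𝓝 (0 : ℝ), transvection f e a ≤ transvection f e b := by
  rcases hab.eq_or_lt with rfl | hlt
  · exact .of_forall fun _ ↦ le_rfl
  · have tendsto_transvection (x : ℝ) : Tendsto (transvection f · x) (𝓝 0) (𝓝 x) := by
      have h : Continuous fun e : ℝ ↦ x + f x • e := by fun_prop
      simpa [transvection.apply] using h.tendsto 0
    exact ((tendsto_transvection a).eventually_lt (tendsto_transvection b) hlt).mono
      fun _ ↦ le_of_lt

lemma eventually_transvection_le_abs (f : Module.Dual ℚ ℝ) {v x : ℝ} (h : v ≤ |x|) :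
    ∀ᶠ e in 𝓝 (0 : ℝ), transvection f e v ≤ |transvection f e x| := by
  rcases le_abs.1 h with h | h
  · filter_upwards [eventually_transvection_le_transvection f h] with e he
    exact he.trans (le_abs_self _)
  · filter_upwards [eventually_transvection_le_transvection f h] with e he
    rw [map_neg] at he
    exact he.trans (neg_le_abs _)

lemma eventually_transvection_mem_Icc (hf : f 1 = 0) {a b : ℚ} {x : ℝ}
    (hx : x ∈ Icc (a : ℝ) b) : ∀ᶠ e in 𝓝 (0 : ℝ), transvection f e x ∈ Icc (a : ℝ) b := by
  filter_upwards [eventually_transvection_le_transvection f hx.1,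
    eventually_transvection_le_transvection f hx.2] with e ha hb
  rw [transvection_ratCast hf] at ha hb
  exact ⟨ha, hb⟩

lemma exists_eq_ratCast_of_eventually_transvection_le {x : ℝ}
    (h : ∀ f : Module.Dual ℚ ℝ, f 1 = 0 → ∀ᶠ e in 𝓝 (0 : ℝ), transvection f e x ≤ x) :
    ∃ q : ℚ, x = q := by
  by_contra! hx
  obtain ⟨f, hf, hfx⟩ :=
    exists_dual_one_eq_zero_of_irrational (x := x) fun ⟨q, hq⟩ ↦ hx q hq.symm
  obtain ⟨e, hle, he : 0 < e⟩ :=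
    (((h f hf).filter_mono nhdsWithin_le_nhds).and (self_mem_nhdsWithin (s := Ioi 0))).exists
  rw [transvection.apply, hfx, one_smul] at hle
  linarith

lemma eventually_transvection_mem_rect (hf : f 1 = 0) {a b c d : ℚ} {p : ℝ × ℝ}
    (hp : p ∈ rect a b c d) :
    ∀ᶠ e in 𝓝 (0 : ℝ), p.map (transvection f e) (transvection f e) ∈ rect a b c d :=
  (eventually_transvection_mem_Icc hf hp.1).and (eventually_transvection_mem_Icc hf hp.2)

lemma eventually_transvection_le_dinf (f : Module.Dual ℚ ℝ) {v : ℝ} {p q : ℝ × ℝ}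
    (h : v ≤ dinf p q) :
    ∀ᶠ e in 𝓝 (0 : ℝ), transvection f e v ≤
      dinf (p.map (transvection f e) (transvection f e))
        (q.map (transvection f e) (transvection f e)) := by
  simp only [dinf, le_max_iff, Prod.map_fst, Prod.map_snd, ← map_sub] at h ⊢
  rcases h with h | h
  · exact (eventually_transvection_le_abs f h).mono fun _ ↦ .inl
  · exact (eventually_transvection_le_abs f h).mono fun _ ↦ .inr

end Transvection

section MinPairDist

variable {n : ℕ} {d : ℝ × ℝ → ℝ × ℝ → ℝ} {R : Fin n → Set (ℝ × ℝ)}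

lemma offDiag_univ_fin_nonempty (hn : 2 ≤ n) :
    (Finset.univ : Finset (Fin n)).offDiag.Nonempty :=
  ⟨(⟨0, by lia⟩, ⟨1, by lia⟩), by simp⟩

lemma minPairDist_eq_inf' (h : (Finset.univ : Finset (Fin n)).offDiag.Nonempty)
    (p : Fin n → ℝ × ℝ) :
    minPairDist d p = Finset.univ.offDiag.inf' h fun ij ↦ d (p ij.1) (p ij.2) := by
  rw [Finset.inf'_eq_csInf_image, minPairDist]
  congr 1
  ext x
  simp [eq_comm]

lemma le_minPairDist_iff (hn : 2 ≤ n) {p : Fin n → ℝ × ℝ} {v : ℝ} :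
    v ≤ minPairDist d p ↔ ∀ i j, i ≠ j → v ≤ d (p i) (p j) := by
  simp [minPairDist_eq_inf' (offDiag_univ_fin_nonempty hn)]

lemma continuous_minPairDist (hn : 2 ≤ n) (hd : Continuous (Function.uncurry d)) :
    Continuous (minPairDist d : (Fin n → ℝ × ℝ) → ℝ) := by
  simp only [funext (minPairDist_eq_inf' (d := d) (offDiag_univ_fin_nonempty hn))]
  exact Continuous.finset_inf'_apply _ fun ij _ ↦
    hd.comp₂ (continuous_apply ij.1) (continuous_apply ij.2)

lemma selVals_eq_image : selVals d R = minPairDist d '' univ.pi R := by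
  ext v
  simp [selVals, eq_comm]

lemma isCompact_selVals (hn : 2 ≤ n) (hd : Continuous (Function.uncurry d))
    (hR : ∀ i, IsCompact (R i)) : IsCompact (selVals d R) := by
  rw [selVals_eq_image]
  exact (isCompact_univ_pi hR).image (continuous_minPairDist hn hd)

lemma selVals_nonempty (hR : ∀ i, (R i).Nonempty) : (selVals d R).Nonempty := by
  rw [selVals_eq_image]
  exact (univ_pi_nonempty_iff.2 hR).image _

end MinPairDist

lemma continuous_uncurry_dinf : Continuous (Function.uncurry dinf) := by
  unfold dinf Function.uncurry
  fun_prop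

lemma isCompact_rect (a b c d : ℝ) : IsCompact (rect a b c d) :=
  isCompact_Icc.prod isCompact_Icc

lemma rect_nonempty {a b c d : ℝ} (hab : a ≤ b) (hcd : c ≤ d) : (rect a b c d).Nonempty :=
  (nonempty_Icc.2 hab).prod (nonempty_Icc.2 hcd)

lemma eventually_exists_mem_selVals_transvection_le {n : ℕ} (hn : 2 ≤ n) {f : Module.Dual ℚ ℝ}
    (hf : f 1 = 0) {lo hi bo tp : Fin n → ℚ} {v : ℝ}
    (hv : v ∈ selVals dinf fun i ↦ rect (lo i) (hi i) (bo i) (tp i)) :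
    ∀ᶠ e in 𝓝 (0 : ℝ), ∃ w ∈ selVals dinf fun i ↦ rect (lo i) (hi i) (bo i) (tp i),
      transvection f e v ≤ w := by
  obtain ⟨p, hp, rfl⟩ := hv
  have pairwise_le := (le_minPairDist_iff (d := dinf) (p := p) hn).1 le_rfl
  have eventually_mem := eventually_all.2 fun i ↦ eventually_transvection_mem_rect hf (hp i)
  have eventually_le := eventually_all.2 fun i ↦ eventually_all.2 fun j ↦
    eventually_all.2 fun hij ↦ eventually_transvection_le_dinf f (pairwise_le i j hij)
  filter_upwards [eventually_mem, eventually_le] with e hmem hle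
  exact ⟨_, ⟨_, hmem, rfl⟩, (le_minPairDist_iff hn).2 hle⟩

theorem stmt14 (n : ℕ) (hn : 2 ≤ n) (lo hi bo tp : Fin n → ℚ)
    (hx : ∀ i, lo i ≤ hi i) (hy : ∀ i, bo i ≤ tp i) :
    ∃ q : ℚ,
      sSup (selVals dinf fun i => rect (lo i : ℝ) (hi i : ℝ) (bo i : ℝ) (tp i : ℝ))
        = (q : ℝ) := by
  have compact : IsCompact (selVals dinf fun i ↦ rect (lo i : ℝ) (hi i) (bo i) (tp i)) :=
    isCompact_selVals hn continuous_uncurry_dinf fun _ ↦ isCompact_rect _ _ _ _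
  have sSup_mem := compact.sSup_mem <| selVals_nonempty fun i ↦
    rect_nonempty (Rat.cast_le.2 (hx i)) (Rat.cast_le.2 (hy i))
  refine exists_eq_ratCast_of_eventually_transvection_le fun f hf ↦ ?_
  filter_upwards [eventually_exists_mem_selVals_transvection_le hn hf sSup_mem]
    with e ⟨w, hw, hle⟩
  exact hle.trans (le_csSup compact.bddAbove hw)
end
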